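/- arXiv:1901.01385 — 2 statements merged into one kernel-verified Lean document; each statement's English description precedes it below -/
import Mathlib

section
/- Let K be an algebraically closed field and n ≥ 1. Every effective regular action of the n-dimensional torus T_n = (K^×)^n on the free associative algebra F_n = FreeAlgebra K (Fin n) is linearizable. -/
open FreeAlgebra

/-- A torus action `σ` of `(Kˣ)^r` on the free algebra is *regular* if the image of each
generator depends on `t` as a Laurent polynomial with coefficients in the free algebra. -/
def TorusActionIsRegular {K : Type} [Field K] {n r : ℕ}
    (σ : (Fin r → Kˣ) →* (FreeAlgebra K (Fin n) ≃ₐ[K] FreeAlgebra K (Fin n))) : Prop :=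
  ∀ i : Fin n, ∃ a : ((Fin r → ℤ) →₀ FreeAlgebra K (Fin n)),
    ∀ t : Fin r → Kˣ,
      σ t (ι K i) = a.sum fun m c => ((∏ j : Fin r, (t j) ^ (m j) : Kˣ) : K) • c

/-- A torus action on the free algebra is *linearizable* if some algebra automorphism `β`
conjugates it into an action mapping each generator into the linear span of the generators. -/
def TorusActionIsLinearizable {K : Type} [Field K] {n r : ℕ}
    (σ : (Fin r → Kˣ) →* (FreeAlgebra K (Fin n) ≃ₐ[K] FreeAlgebra K (Fin n))) : Prop :=
  ∃ β : FreeAlgebra K (Fin n) ≃ₐ[K] FreeAlgebra K (Fin n),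
    ∀ (t : Fin r → Kˣ) (i : Fin n),
      β.symm (σ t (β (ι K i))) ∈
        Submodule.span K (Set.range (ι K : Fin n → FreeAlgebra K (Fin n)))

section TorusCharacters

variable {K : Type} [Field K] {r : ℕ}

/-- The character `t ↦ ∏ j, t j ^ m j` of the torus `(Kˣ)^r`. -/
def torusCharacter (m : Fin r → ℤ) : (Fin r → Kˣ) →* K :=
  (Units.coeHom K).comp
    { toFun := fun t => ∏ j, t j ^ m j
      map_one' := by simp
      map_mul' := fun s t => by simp [mul_zpow, Finset.prod_mul_distrib] }

theorem torusCharacter_apply (m : Fin r → ℤ) (t : Fin r → Kˣ) :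
    torusCharacter m t = ((∏ j, t j ^ m j : Kˣ) : K) := rfl

@[simp]
theorem torusCharacter_zero (t : Fin r → Kˣ) : torusCharacter (K := K) 0 t = 1 := by
  simp [torusCharacter_apply]

theorem torusCharacter_add (m m' : Fin r → ℤ) (t : Fin r → Kˣ) :
    torusCharacter (m + m') t = torusCharacter m t * torusCharacter m' t := by
  simp [torusCharacter_apply, zpow_add, Finset.prod_mul_distrib]

theorem torusCharacter_ne_zero (m : Fin r → ℤ) (t : Fin r → Kˣ) : torusCharacter m t ≠ 0 :=
  Units.ne_zero _

theorem exists_units_zpow_ne_one [Infinite K] {k : ℤ} (hk : k ≠ 0) : ∃ x : Kˣ, x ^ k ≠ 1 := by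
  by_contra! h
  have hfin := Polynomial.rootSet_finite
    (Polynomial.X ^ (k.natAbs + 1) - Polynomial.X : Polynomial K) K
  refine Set.infinite_univ (hfin.subset fun x _ => ?_)
  have hne : (Polynomial.X ^ (k.natAbs + 1) - Polynomial.X : Polynomial K) ≠ 0 := by
    intro h0
    have := congrArg (fun p => Polynomial.coeff p 1) h0
    simp [Polynomial.coeff_X_pow, hk] at this
  rw [Polynomial.mem_rootSet_of_ne hne]
  rcases eq_or_ne x 0 with rfl | hx
  · simp
  · have h1 : (Units.mk0 x hx) ^ k.natAbs = 1 := by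
      rcases Int.natAbs_eq k with h2 | h2
      · have := h (Units.mk0 x hx)
        rw [h2, zpow_natCast] at this
        exact this
      · have := h (Units.mk0 x hx)
        rw [h2, zpow_neg, zpow_natCast, inv_eq_one] at this
        exact this
    have h3 : x ^ k.natAbs = 1 := by simpa using congrArg (Units.val) h1
    simp [pow_succ, h3]

theorem torusCharacter_injective [Infinite K] :
    Function.Injective (torusCharacter : (Fin r → ℤ) → ((Fin r → Kˣ) →* K)) := by
  intro m m' h
  by_contra hne
  obtain ⟨j, hj⟩ := Function.ne_iff.mp hne
  obtain ⟨x, hx⟩ := exists_units_zpow_ne_one (K := K) (sub_ne_zero.mpr hj)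
  have key : ∀ q : Fin r → ℤ, torusCharacter q (Pi.mulSingle j x) = ((x ^ q j : Kˣ) : K) := by
    intro q
    rw [torusCharacter_apply, Finset.prod_eq_single j]
    · simp
    · intro i _ hi
      simp [Pi.mulSingle_eq_of_ne hi]
    · simp
  have h2 := DFunLike.congr_fun h (Pi.mulSingle j x)
  rw [key, key] at h2
  exact hx (by rw [zpow_sub, Units.ext h2, mul_inv_cancel])

/-- Vector-valued Dedekind independence of the characters of a torus. -/
theorem eq_zero_of_sum_torusCharacter_smul_eq_zero [Infinite K] {V : Type*} [AddCommGroup V]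
    [Module K V] (a : (Fin r → ℤ) →₀ V)
    (h : ∀ t : Fin r → Kˣ, (a.sum fun m v => torusCharacter m t • v) = 0) : a = 0 := by
  ext m
  rw [Finsupp.coe_zero, Pi.zero_apply, ← Module.forall_dual_apply_eq_zero_iff K]
  intro φ
  have hli := (linearIndependent_monoidHom (Fin r → Kˣ) K).comp _
    (torusCharacter_injective (K := K) (r := r))
  rw [linearIndependent_iff] at hli
  have h0 := hli (a.mapRange φ (map_zero φ)) (by
    rw [Finsupp.linearCombination_apply, Finsupp.sum_mapRange_index (by simp)]
    ext t
    have := congrArg φ (h t)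
    rw [map_zero, Finsupp.sum, map_sum] at this
    rw [Finsupp.sum, Finset.sum_apply, Pi.zero_apply, ← this]
    refine Finset.sum_congr rfl fun q _ => ?_
    simp [mul_comm])
  simpa using DFunLike.congr_fun h0 m

theorem mem_of_sum_torusCharacter_smul_mem [Infinite K] {V : Type*} [AddCommGroup V]
    [Module K V] (N : Submodule K V) (a : (Fin r → ℤ) →₀ V)
    (h : ∀ t : Fin r → Kˣ, (a.sum fun m v => torusCharacter m t • v) ∈ N) (m : Fin r → ℤ) :
    a m ∈ N := by
  have h0 := eq_zero_of_sum_torusCharacter_smul_eq_zero (K := K)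
    (a.mapRange N.mkQ (map_zero _)) (by
      intro t
      rw [Finsupp.sum_mapRange_index (by simp)]
      have := h t
      rw [← N.ker_mkQ, LinearMap.mem_ker, Finsupp.sum, map_sum] at this
      simpa [Finsupp.sum] using this)
  have := DFunLike.congr_fun h0 m
  rwa [Finsupp.mapRange_apply, Finsupp.zero_apply, ← LinearMap.mem_ker, N.ker_mkQ] at this

/-- Every nonzero one-parameter subgroup `x ↦ (x ^ ℓ j)_j` is nontrivial on points. -/
theorem exists_oneParameter_ne_one [Infinite K] {ℓ : Fin r → ℤ} (hℓ : ℓ ≠ 0) :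
    ∃ u : Fin r → Kˣ, u ≠ 1 ∧
      ∀ m : Fin r → ℤ, ∑ j, m j * ℓ j = 0 → torusCharacter (K := K) m u = 1 := by
  obtain ⟨j, hj⟩ := Function.ne_iff.mp hℓ
  obtain ⟨x, hx⟩ := exists_units_zpow_ne_one (K := K) hj
  refine ⟨fun j => x ^ ℓ j, fun h => hx (congrFun h j), fun m hm => ?_⟩
  have : ∏ j, (x ^ ℓ j) ^ m j = x ^ ∑ j, m j * ℓ j := by
    have hsum := map_sum (zmultiplesHom (Additive Kˣ) (Additive.ofMul x)) (fun j => m j * ℓ j)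
      Finset.univ
    simp only [zmultiplesHom_apply] at hsum
    rw [← ofMul_zpow] at hsum
    refine .trans (Finset.prod_congr rfl fun i _ => ?_) (congrArg Additive.toMul hsum.symm)
    rw [← zpow_mul, mul_comm]
    rfl
  rw [torusCharacter_apply, this, hm, zpow_zero, Units.val_one]

end TorusCharacters

section TorusWeights

variable {K : Type} [Field K] {r : ℕ} {A : Type} [Ring A] [Algebra K A]

/-- The weight space of weight `m` for a family of algebra endomorphisms indexed by a torus. -/
def torusWeightSpace (ρ : (Fin r → Kˣ) → A →ₐ[K] A) (m : Fin r → ℤ) : Submodule K A :=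
  ⨅ t, LinearMap.ker ((ρ t).toLinearMap - torusCharacter m t • LinearMap.id)

theorem mem_torusWeightSpace {ρ : (Fin r → Kˣ) → A →ₐ[K] A} {m : Fin r → ℤ} {v : A} :
    v ∈ torusWeightSpace ρ m ↔ ∀ t, ρ t v = torusCharacter m t • v := by
  simp [torusWeightSpace, sub_eq_zero]

variable {ρ : (Fin r → Kˣ) → A →ₐ[K] A}

theorem mul_mem_torusWeightSpace {m m' : Fin r → ℤ} {v w : A} (hv : v ∈ torusWeightSpace ρ m)
    (hw : w ∈ torusWeightSpace ρ m') : v * w ∈ torusWeightSpace ρ (m + m') := by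
  rw [mem_torusWeightSpace] at *
  intro t
  rw [map_mul, hv, hw, torusCharacter_add, smul_mul_smul_comm]

theorem algebraMap_mem_torusWeightSpace (c : K) : algebraMap K A c ∈ torusWeightSpace ρ 0 := by
  rw [mem_torusWeightSpace]
  intro t
  simp

theorem one_mem_torusWeightSpace : (1 : A) ∈ torusWeightSpace ρ 0 := by
  simpa using algebraMap_mem_torusWeightSpace (ρ := ρ) (1 : K)

theorem iSup_torusWeightSpace_eq_top_of_adjoin {s : Set A} (hs : Algebra.adjoin K s = ⊤)
    (h : ∀ a ∈ s, a ∈ ⨆ m, torusWeightSpace ρ m) : ⨆ m, torusWeightSpace ρ m = ⊤ := by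
  rw [eq_top_iff]
  intro a _
  have ha : a ∈ Algebra.adjoin K s := hs ▸ Algebra.mem_top
  induction ha using Algebra.adjoin_induction with
  | mem x hx => exact h x hx
  | algebraMap c => exact Submodule.mem_iSup_of_mem 0 (algebraMap_mem_torusWeightSpace c)
  | add x y _ _ hx hy => exact add_mem (hx trivial) (hy trivial)
  | mul x y _ _ hx hy =>
    have hmul : (⨆ m, torusWeightSpace ρ m) * (⨆ m, torusWeightSpace ρ m) ≤
        ⨆ m, torusWeightSpace ρ m := by
      rw [Submodule.iSup_mul]
      refine iSup_le fun m => ?_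
      rw [Submodule.mul_iSup]
      refine iSup_le fun m' => Submodule.mul_le.mpr fun v hv w hw => ?_
      exact Submodule.mem_iSup_of_mem _ (mul_mem_torusWeightSpace hv hw)
    exact hmul (Submodule.mul_mem_mul (hx trivial) (hy trivial))

/-- If a sum of weight vectors of distinct weights lies in a stable subspace, so does each term. -/
theorem apply_mem_of_sum_mem [Infinite K] {N : Submodule K A}
    (hN : ∀ t, ∀ v ∈ N, ρ t v ∈ N) (a : (Fin r → ℤ) →₀ A)
    (ha : ∀ m, a m ∈ torusWeightSpace ρ m) (hsum : (a.sum fun _ v => v) ∈ N) (m : Fin r → ℤ) :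
    a m ∈ N := by
  refine mem_of_sum_torusCharacter_smul_mem N a (fun t => ?_) m
  have := hN t _ hsum
  rw [Finsupp.sum, map_sum] at this
  simpa only [Finsupp.sum, mem_torusWeightSpace.mp (ha _) t] using this

theorem apply_eq_zero_of_sum_eq_zero [Infinite K] (a : (Fin r → ℤ) →₀ A)
    (ha : ∀ m, a m ∈ torusWeightSpace ρ m) (hsum : (a.sum fun _ v => v) = 0) (m : Fin r → ℤ) :
    a m = 0 := by
  have := apply_mem_of_sum_mem (N := ⊥) (ρ := ρ) (by simp) a ha (by simpa using hsum) m
  simpa using this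

theorem exists_sum_of_iSup_eq_top (h : ⨆ m, torusWeightSpace ρ m = ⊤) (v : A) :
    ∃ a : (Fin r → ℤ) →₀ A, (∀ m, a m ∈ torusWeightSpace ρ m) ∧ (a.sum fun _ v => v) = v :=
  (Submodule.mem_iSup_iff_exists_finsupp _ _).mp (h ▸ Submodule.mem_top)

end TorusWeights

namespace FreeAlgebra

section OrderFiltration

variable {K : Type} [Field K] {X : Type}

theorem basisFreeMonoid_eq (w : FreeMonoid X) : basisFreeMonoid K X w =
    (equivMonoidAlgebraFreeMonoid (R := K) (X := X)).symm (MonoidAlgebra.of K (FreeMonoid X) w) :=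
  rfl

theorem basisFreeMonoid_one : basisFreeMonoid K X 1 = 1 := by
  rw [basisFreeMonoid_eq, map_one, map_one]

theorem basisFreeMonoid_mul (v w : FreeMonoid X) :
    basisFreeMonoid K X (v * w) = basisFreeMonoid K X v * basisFreeMonoid K X w := by
  simp only [basisFreeMonoid_eq, map_mul]

theorem basisFreeMonoid_of (x : X) : basisFreeMonoid K X (FreeMonoid.of x) = ι K x := by
  rw [basisFreeMonoid_eq, AlgEquiv.symm_apply_eq]
  simp [equivMonoidAlgebraFreeMonoid]

theorem basisFreeMonoid_of_mul (x : X) (w : FreeMonoid X) :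
    basisFreeMonoid K X (FreeMonoid.of x * w) = ι K x * basisFreeMonoid K X w := by
  rw [basisFreeMonoid_mul, basisFreeMonoid_of]

variable (K X) in
/-- Elements of the free algebra all of whose monomials have length at least `k`. -/
def orderFiltration (k : ℕ) : Submodule K (FreeAlgebra K X) :=
  Submodule.span K (basisFreeMonoid K X '' {w | k ≤ w.length})

theorem mem_orderFiltration {k : ℕ} {v : FreeAlgebra K X} : v ∈ orderFiltration K X k ↔
    ∀ w, (basisFreeMonoid K X).repr v w ≠ 0 → k ≤ w.length := by
  rw [orderFiltration, Module.Basis.mem_span_image]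
  simp [Set.subset_def]

theorem basisFreeMonoid_mem_orderFiltration {k : ℕ} {w : FreeMonoid X} (h : k ≤ w.length) :
    basisFreeMonoid K X w ∈ orderFiltration K X k :=
  Submodule.subset_span ⟨w, h, rfl⟩

theorem orderFiltration_anti {j k : ℕ} (h : j ≤ k) :
    orderFiltration K X k ≤ orderFiltration K X j :=
  Submodule.span_mono (Set.image_mono fun _ hw => h.trans hw)

theorem mem_orderFiltration_zero (v : FreeAlgebra K X) : v ∈ orderFiltration K X 0 := by
  simp [mem_orderFiltration]

theorem eq_zero_of_forall_mem_orderFiltration {v : FreeAlgebra K X}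
    (h : ∀ k, v ∈ orderFiltration K X k) : v = 0 := by
  rw [← (basisFreeMonoid K X).repr.map_eq_zero_iff]
  ext w
  by_contra hw
  exact absurd (mem_orderFiltration.mp (h (w.length + 1)) w hw) (by simp)

theorem ι_mem_orderFiltration (x : X) : ι K x ∈ orderFiltration K X 1 := by
  rw [← basisFreeMonoid_of]
  exact basisFreeMonoid_mem_orderFiltration (by simp)

theorem mul_mem_orderFiltration {j k : ℕ} {v w : FreeAlgebra K X}
    (hv : v ∈ orderFiltration K X j) (hw : w ∈ orderFiltration K X k) :
    v * w ∈ orderFiltration K X (j + k) := by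
  have h : orderFiltration K X j * orderFiltration K X k ≤ orderFiltration K X (j + k) := by
    rw [orderFiltration, orderFiltration, Submodule.span_mul_span, Submodule.span_le]
    rintro _ ⟨_, ⟨a, ha, rfl⟩, _, ⟨b, hb, rfl⟩, rfl⟩
    simp only [← basisFreeMonoid_mul]
    refine basisFreeMonoid_mem_orderFiltration ?_
    rw [FreeMonoid.length_mul]
    exact add_le_add ha hb
  exact h (Submodule.mul_mem_mul hv hw)

theorem map_mem_orderFiltration {θ : FreeAlgebra K X →ₐ[K] FreeAlgebra K X}
    (hθ : ∀ x, θ (ι K x) ∈ orderFiltration K X 1) {k : ℕ} {v : FreeAlgebra K X}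
    (hv : v ∈ orderFiltration K X k) : θ v ∈ orderFiltration K X k := by
  have key : ∀ w : FreeMonoid X, θ (basisFreeMonoid K X w) ∈ orderFiltration K X w.length := by
    intro w
    induction w using FreeMonoid.inductionOn' with
    | one => exact mem_orderFiltration_zero _
    | of_mul x w ih =>
      rw [basisFreeMonoid_of_mul, map_mul, FreeMonoid.length_mul, FreeMonoid.length_of]
      exact mul_mem_orderFiltration (hθ x) ih
  have : orderFiltration K X k ≤ (orderFiltration K X k).comap θ.toLinearMap := by
    conv_lhs => rw [orderFiltration]
    rw [Submodule.span_le]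
    rintro _ ⟨w, hw, rfl⟩
    exact orderFiltration_anti hw (key w)
  exact this hv

/-- `θ` is the identity modulo monomials of length at least two on generators. -/
def IsUnipotent (θ : FreeAlgebra K X →ₐ[K] FreeAlgebra K X) : Prop :=
  ∀ x, θ (ι K x) - ι K x ∈ orderFiltration K X 2

namespace IsUnipotent

variable {θ : FreeAlgebra K X →ₐ[K] FreeAlgebra K X}

theorem map_ι_mem (hθ : IsUnipotent θ) (x : X) : θ (ι K x) ∈ orderFiltration K X 1 := by
  have := add_mem (orderFiltration_anti one_le_two (hθ x)) (ι_mem_orderFiltration x)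
  rwa [sub_add_cancel] at this

theorem map_sub_mem (hθ : IsUnipotent θ) {k : ℕ} {v : FreeAlgebra K X}
    (hv : v ∈ orderFiltration K X k) : θ v - v ∈ orderFiltration K X (k + 1) := by
  have key : ∀ w : FreeMonoid X,
      θ (basisFreeMonoid K X w) - basisFreeMonoid K X w ∈ orderFiltration K X (w.length + 1) := by
    intro w
    induction w using FreeMonoid.inductionOn' with
    | one => simp [basisFreeMonoid_one]
    | of_mul x w ih =>
      rw [basisFreeMonoid_of_mul, map_mul, FreeMonoid.length_mul, FreeMonoid.length_of]
      have h1 : θ (ι K x) * θ (basisFreeMonoid K X w) - ι K x * basisFreeMonoid K X w =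
          (θ (ι K x) - ι K x) * θ (basisFreeMonoid K X w) +
            ι K x * (θ (basisFreeMonoid K X w) - basisFreeMonoid K X w) := by
        noncomm_ring
      rw [h1]
      refine add_mem ?_ ?_
      · have := mul_mem_orderFiltration (hθ x) (map_mem_orderFiltration hθ.map_ι_mem
          (basisFreeMonoid_mem_orderFiltration (K := K) (le_refl w.length)))
        convert this using 2
        ring
      · have := mul_mem_orderFiltration (ι_mem_orderFiltration (K := K) x) ih
        rwa [← add_assoc] at this
  have : orderFiltration K X k ≤
      (orderFiltration K X (k + 1)).comap (θ.toLinearMap - LinearMap.id) := by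
    conv_lhs => rw [orderFiltration]
    rw [Submodule.span_le]
    rintro _ ⟨w, hw, rfl⟩
    exact orderFiltration_anti (Nat.succ_le_succ hw) (key w)
  exact this hv

theorem injective (hθ : IsUnipotent θ) : Function.Injective θ := by
  rw [injective_iff_map_eq_zero]
  intro v hv
  refine eq_zero_of_forall_mem_orderFiltration fun k => ?_
  induction k with
  | zero => exact mem_orderFiltration_zero v
  | succ k ih =>
    have := hθ.map_sub_mem ih
    rwa [hv, zero_sub, neg_mem_iff] at this

theorem eq_of_map_eq_smul (hθ : IsUnipotent θ) {v : FreeAlgebra K X} {c : K}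
    (hv : θ v = c • v) : θ v = v := by
  by_contra hne
  have hc : c - 1 ≠ 0 := by
    intro hc
    rw [sub_eq_zero.mp hc, one_smul] at hv
    exact hne hv
  refine hne ?_
  have : v = 0 := by
    refine eq_zero_of_forall_mem_orderFiltration fun k => ?_
    induction k with
    | zero => exact mem_orderFiltration_zero v
    | succ k ih =>
      have := hθ.map_sub_mem ih
      have h1 : θ v - v = (c - 1) • v := by rw [hv, sub_smul, one_smul]
      rwa [h1, Submodule.smul_mem_iff _ hc] at this
  rw [this, map_zero]

/-- A unipotent element of a torus acting by weights is trivial. -/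
theorem eq_id_of_iSup_torusWeightSpace {r : ℕ}
    {ρ : (Fin r → Kˣ) → FreeAlgebra K X →ₐ[K] FreeAlgebra K X}
    (hspan : ⨆ m, torusWeightSpace ρ m = ⊤) {u : Fin r → Kˣ} (hu : IsUnipotent (ρ u)) :
    ρ u = AlgHom.id K _ := by
  ext x
  obtain ⟨a, ha, hsum⟩ := exists_sum_of_iSup_eq_top hspan (ι K x)
  change ρ u (ι K x) = ι K x
  rw [← hsum, Finsupp.sum, map_sum]
  exact Finset.sum_congr rfl fun m _ => hu.eq_of_map_eq_smul (mem_torusWeightSpace.mp (ha m) u)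

end IsUnipotent

theorem mem_orderFiltration_one {v : FreeAlgebra K X} :
    v ∈ orderFiltration K X 1 ↔ algebraMapInv v = 0 := by
  have h1 : ∀ v ∈ orderFiltration K X 1, algebraMapInv v = 0 := by
    have : orderFiltration K X 1 ≤ LinearMap.ker
        (algebraMapInv : FreeAlgebra K X →ₐ[K] K).toLinearMap := by
      rw [orderFiltration, Submodule.span_le]
      rintro _ ⟨w, hw, rfl⟩
      induction w using FreeMonoid.casesOn with
      | one => simp at hw
      | of_mul x w => simp [basisFreeMonoid_of_mul, algebraMapInv]
    exact fun v hv => this hv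
  refine ⟨h1 v, fun hv => ?_⟩
  have h2 : ∀ v : FreeAlgebra K X, v - algebraMap K _ (algebraMapInv v) ∈
      orderFiltration K X 1 := by
    intro v
    have : (⊤ : Submodule K (FreeAlgebra K X)) ≤ (orderFiltration K X 1).comap
        (LinearMap.id - (Algebra.linearMap K _).comp
          (algebraMapInv : FreeAlgebra K X →ₐ[K] K).toLinearMap) := by
      rw [← (basisFreeMonoid K X).span_eq, Submodule.span_le]
      rintro _ ⟨w, rfl⟩
      induction w using FreeMonoid.casesOn with
      | one => simp [basisFreeMonoid_one]
      | of_mul x w =>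
        simpa [basisFreeMonoid_of_mul, algebraMapInv, FreeMonoid.length_mul] using
          orderFiltration_anti (Nat.le_add_right 1 0) (mul_mem_orderFiltration
            (ι_mem_orderFiltration (K := K) x)
            (mem_orderFiltration_zero (basisFreeMonoid K X w)))
    exact this (Submodule.mem_top (x := v))
  simpa [hv] using h2 v

end OrderFiltration

end FreeAlgebra

namespace FreeAlgebra

section LinearPart

variable {K : Type} [Field K] {X : Type}

variable (K X) in
/-- The abelianization map from the free algebra to the polynomial ring. -/
noncomputable def toMvPolynomial : FreeAlgebra K X →ₐ[K] MvPolynomial X K :=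
  lift K MvPolynomial.X

@[simp]
theorem toMvPolynomial_ι (x : X) : toMvPolynomial K X (ι K x) = MvPolynomial.X x := by
  simp [toMvPolynomial]

theorem toMvPolynomial_surjective : Function.Surjective (toMvPolynomial K X) := by
  rw [← AlgHom.range_eq_top, eq_top_iff, ← MvPolynomial.adjoin_range_X, Algebra.adjoin_le_iff]
  rintro _ ⟨x, rfl⟩
  exact ⟨ι K x, toMvPolynomial_ι x⟩

theorem constantCoeff_toMvPolynomial (v : FreeAlgebra K X) :
    MvPolynomial.constantCoeff (toMvPolynomial K X v) = algebraMapInv v := by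
  have : (MvPolynomial.aeval (fun _ => (0 : K))).comp (toMvPolynomial K X) = algebraMapInv := by
    ext x
    simp [algebraMapInv]
  rw [← this]
  simp

variable (K X) in
/-- The coefficients of the linear monomials of an element of the free algebra. -/
noncomputable def linearPart : FreeAlgebra K X →ₗ[K] (X → K) :=
  LinearMap.pi fun x =>
    (MvPolynomial.lcoeff K (Finsupp.single x 1)).comp (toMvPolynomial K X).toLinearMap

theorem linearPart_apply (v : FreeAlgebra K X) (x : X) :
    linearPart K X v x = (toMvPolynomial K X v).coeff (Finsupp.single x 1) := rfl

theorem linearPart_ι [DecidableEq X] (x : X) : linearPart K X (ι K x) = Pi.single x 1 := by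
  ext y
  rw [linearPart_apply, toMvPolynomial_ι, MvPolynomial.coeff_X]
  simp [Pi.single_apply, Finsupp.single_left_inj, eq_comm]

theorem linearPart_algebraMap (c : K) : linearPart K X (algebraMap K _ c) = 0 := by
  classical
  ext y
  rw [linearPart_apply, AlgHom.commutes, MvPolynomial.algebraMap_eq, MvPolynomial.coeff_C,
    if_neg (by simp [eq_comm])]
  rfl

theorem linearPart_ι_mul_ι_mul (x y : X) (v : FreeAlgebra K X) :
    linearPart K X (ι K x * (ι K y * v)) = 0 := by
  classical
  ext z
  rw [linearPart_apply, map_mul, map_mul, toMvPolynomial_ι, toMvPolynomial_ι,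
    MvPolynomial.coeff_X_mul']
  split_ifs with h
  · rw [MvPolynomial.coeff_X_mul', if_neg]
    · rfl
    · have : z = x := by simpa [Finsupp.single_apply, eq_comm] using h
      simp [this]
  · rfl

theorem sub_sub_mem_orderFiltration_two [Fintype X] (v : FreeAlgebra K X) :
    v - algebraMap K _ (algebraMapInv v) - ∑ x, linearPart K X v x • ι K x ∈
      orderFiltration K X 2 := by
  classical
  have : (⊤ : Submodule K (FreeAlgebra K X)) ≤ (orderFiltration K X 2).comap
      (LinearMap.id - (Algebra.linearMap K _).comp
        (algebraMapInv : FreeAlgebra K X →ₐ[K] K).toLinearMap -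
        (Fintype.linearCombination K (ι K)).comp (linearPart K X)) := by
    rw [← (basisFreeMonoid K X).span_eq, Submodule.span_le]
    rintro _ ⟨w, rfl⟩
    induction w using FreeMonoid.casesOn with
    | one =>
      have := linearPart_algebraMap (K := K) (X := X) 1
      rw [map_one] at this
      simp [basisFreeMonoid_one, this]
    | of_mul x w =>
      induction w using FreeMonoid.casesOn with
      | one =>
        simp [basisFreeMonoid_of, linearPart_ι, algebraMapInv]
      | of_mul y w =>
        have h := mul_mem_orderFiltration (ι_mem_orderFiltration (K := K) x)
          (mul_mem_orderFiltration (ι_mem_orderFiltration (K := K) y)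
            (mem_orderFiltration_zero (basisFreeMonoid K X w)))
        simpa [basisFreeMonoid_of_mul, algebraMapInv, linearPart_ι_mul_ι_mul] using h
  simpa [Fintype.linearCombination_apply] using this (Submodule.mem_top (x := v))

/-- Elements with equal constant and linear parts agree modulo monomials of length two. -/
theorem sub_mem_orderFiltration_two [Fintype X] {v w : FreeAlgebra K X}
    (h0 : algebraMapInv v = algebraMapInv w) (h1 : linearPart K X v = linearPart K X w) :
    v - w ∈ orderFiltration K X 2 := by
  have := sub_mem (sub_sub_mem_orderFiltration_two v) (sub_sub_mem_orderFiltration_two w)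
  rw [h0, h1] at this
  convert this using 1
  abel

theorem isUnipotent_of_toMvPolynomial_comp_eq [Fintype X]
    {θ : FreeAlgebra K X →ₐ[K] FreeAlgebra K X}
    (h : ∀ x, toMvPolynomial K X (θ (ι K x)) = MvPolynomial.X x) : IsUnipotent θ := by
  intro x
  replace h := (h x).trans (toMvPolynomial_ι x).symm
  refine sub_mem_orderFiltration_two ?_ ?_
  · rw [← constantCoeff_toMvPolynomial, h, constantCoeff_toMvPolynomial]
  · ext y
    rw [linearPart_apply, h, linearPart_apply]

end LinearPart

end FreeAlgebra

namespace FreeAlgebra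

section UnipotentCoordinates

variable {K : Type} [Field K] {n r : ℕ}

/-- A torus action by automorphisms, viewed as a family of algebra endomorphisms. -/
def torusEnd (σ : (Fin r → Kˣ) →* (FreeAlgebra K (Fin n) ≃ₐ[K] FreeAlgebra K (Fin n)))
    (t : Fin r → Kˣ) : FreeAlgebra K (Fin n) →ₐ[K] FreeAlgebra K (Fin n) :=
  (σ t : FreeAlgebra K (Fin n) →ₐ[K] FreeAlgebra K (Fin n))

@[simp]
theorem torusEnd_apply (σ : (Fin r → Kˣ) →* (FreeAlgebra K (Fin n) ≃ₐ[K] FreeAlgebra K (Fin n)))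
    (t : Fin r → Kˣ) (v : FreeAlgebra K (Fin n)) : torusEnd σ t v = σ t v := rfl

theorem eq_one_of_isUnipotent_torusEnd
    {σ : (Fin r → Kˣ) →* (FreeAlgebra K (Fin n) ≃ₐ[K] FreeAlgebra K (Fin n))}
    (heff : Function.Injective σ) (hspan : ⨆ m, torusWeightSpace (torusEnd σ) m = ⊤)
    {u : Fin r → Kˣ} (hu : IsUnipotent (torusEnd σ u)) : u = 1 := by
  apply heff
  rw [map_one]
  ext v
  exact DFunLike.congr_fun (hu.eq_id_of_iSup_torusWeightSpace hspan) v

/-- The number of occurrences of each generator in a word. -/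
def wordCount (w : FreeMonoid (Fin n)) : Fin n → ℤ :=
  Multiplicative.toAdd
    (FreeMonoid.lift (fun i => Multiplicative.ofAdd (Pi.single i 1 : Fin n → ℤ)) w)

theorem wordCount_one : wordCount (1 : FreeMonoid (Fin n)) = 0 := by
  simp [wordCount]

theorem wordCount_of_mul (i : Fin n) (w : FreeMonoid (Fin n)) :
    wordCount (FreeMonoid.of i * w) = Pi.single i 1 + wordCount w := by
  simp [wordCount]

theorem sum_wordCount (w : FreeMonoid (Fin n)) : ∑ i, wordCount w i = w.length := by
  induction w using FreeMonoid.inductionOn' with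
  | one => simp [wordCount_one]
  | of_mul i w ih =>
    simp [wordCount_of_mul, Finset.sum_add_distrib, ih, FreeMonoid.length_mul]

/-- The span of the words whose weight, for the given weights of the generators, is `χ`. -/
noncomputable def wordWeightSpace (M : Matrix (Fin n) (Fin r) ℤ) (χ : Fin r → ℤ) :
    Submodule K (FreeAlgebra K (Fin n)) :=
  Submodule.span K (basisFreeMonoid K (Fin n) '' {w | Matrix.vecMul (wordCount w) M = χ})

theorem iSup_wordWeightSpace (M : Matrix (Fin n) (Fin r) ℤ) :
    ⨆ χ, wordWeightSpace (K := K) M χ = ⊤ := by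
  rw [eq_top_iff, ← (basisFreeMonoid K (Fin n)).span_eq, Submodule.span_le]
  rintro _ ⟨w, rfl⟩
  exact Submodule.mem_iSup_of_mem _ (Submodule.subset_span ⟨w, rfl, rfl⟩)

theorem lift_mem_torusWeightSpace
    {ρ : (Fin r → Kˣ) → FreeAlgebra K (Fin n) →ₐ[K] FreeAlgebra K (Fin n)}
    {f : Fin n → FreeAlgebra K (Fin n)} {M : Matrix (Fin n) (Fin r) ℤ}
    (hf : ∀ i, f i ∈ torusWeightSpace ρ (M i)) {χ : Fin r → ℤ} {p : FreeAlgebra K (Fin n)}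
    (hp : p ∈ wordWeightSpace M χ) : lift K f p ∈ torusWeightSpace ρ χ := by
  have key : ∀ w : FreeMonoid (Fin n), lift K f (basisFreeMonoid K (Fin n) w) ∈
      torusWeightSpace ρ (Matrix.vecMul (wordCount w) M) := by
    intro w
    induction w using FreeMonoid.inductionOn' with
    | one =>
      rw [basisFreeMonoid_one, map_one, wordCount_one, Matrix.zero_vecMul]
      exact one_mem_torusWeightSpace
    | of_mul i w ih =>
      rw [basisFreeMonoid_of_mul, map_mul, lift_ι_apply, wordCount_of_mul, Matrix.add_vecMul,
        Matrix.single_one_vecMul]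
      exact mul_mem_torusWeightSpace (hf i) ih
  have : wordWeightSpace M χ ≤ (torusWeightSpace ρ χ).comap (lift K f).toLinearMap := by
    rw [wordWeightSpace, Submodule.span_le]
    rintro _ ⟨w, rfl, rfl⟩
    exact key w
  exact this hp

/-- Words of a given weight all have the same length when the weights are independent. -/
theorem exists_length_of_wordWeightSpace {M : Matrix (Fin n) (Fin n) ℤ} (hM : M.det ≠ 0)
    (χ : Fin n → ℤ) : ∃ d, ∀ p ∈ wordWeightSpace (K := K) M χ,
      p ∈ orderFiltration K (Fin n) d ∧ (p ∈ orderFiltration K (Fin n) (d + 1) → p = 0) := by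
  obtain ⟨d, hd⟩ : ∃ d, ∀ w : FreeMonoid (Fin n), Matrix.vecMul (wordCount w) M = χ →
      w.length = d := by
    by_cases h : ∃ w₀ : FreeMonoid (Fin n), Matrix.vecMul (wordCount w₀) M = χ
    · obtain ⟨w₀, hw₀⟩ := h
      refine ⟨w₀.length, fun w hw => ?_⟩
      have hc : wordCount w - wordCount w₀ = 0 :=
        Matrix.eq_zero_of_vecMul_eq_zero hM (by rw [Matrix.sub_vecMul, hw, hw₀, sub_self])
      have := sum_wordCount w
      rw [sub_eq_zero.mp hc, sum_wordCount] at this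
      exact_mod_cast this.symm
    · exact ⟨0, fun w hw => absurd ⟨w, hw⟩ h⟩
  refine ⟨d, fun p hp => ?_⟩
  rw [wordWeightSpace, Module.Basis.mem_span_image] at hp
  have hsupp : ∀ w, (basisFreeMonoid K (Fin n)).repr p w ≠ 0 → w.length = d :=
    fun w hw => hd w (hp (by simpa using hw))
  refine ⟨mem_orderFiltration.mpr fun w hw => (hsupp w hw).ge, fun h => ?_⟩
  rw [← (basisFreeMonoid K (Fin n)).repr.map_eq_zero_iff]
  ext w
  by_contra hw
  have := mem_orderFiltration.mp h w hw
  rw [hsupp w hw] at this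
  omega

theorem IsUnipotent.exists_sub_map_mem {θ : FreeAlgebra K (Fin n) →ₐ[K] FreeAlgebra K (Fin n)}
    (hθ : IsUnipotent θ) (v : FreeAlgebra K (Fin n)) (k : ℕ) :
    ∃ p, v - θ p ∈ orderFiltration K (Fin n) k := by
  induction k with
  | zero => exact ⟨0, mem_orderFiltration_zero _⟩
  | succ k ih =>
    obtain ⟨p, hp⟩ := ih
    refine ⟨p + (v - θ p), ?_⟩
    have := neg_mem (hθ.map_sub_mem hp)
    convert this using 1
    rw [map_add]
    abel

variable [Infinite K] {σ : (Fin n → Kˣ) →* (FreeAlgebra K (Fin n) ≃ₐ[K] FreeAlgebra K (Fin n))}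

/-- Semi-invariant coordinates that are the generators to first order have independent weights. -/
theorem det_weights_ne_zero (heff : Function.Injective σ)
    (hspan : ⨆ m, torusWeightSpace (torusEnd σ) m = ⊤)
    (haug : ∀ t i, σ t (ι K i) ∈ orderFiltration K (Fin n) 1)
    {f : Fin n → FreeAlgebra K (Fin n)} {M : Matrix (Fin n) (Fin n) ℤ}
    (hf : ∀ i, f i ∈ torusWeightSpace (torusEnd σ) (M i))
    (hfι : ∀ i, f i - ι K i ∈ orderFiltration K (Fin n) 2) : M.det ≠ 0 := by
  intro hdet
  obtain ⟨ℓ, hℓ, hMℓ⟩ := Matrix.exists_mulVec_eq_zero_iff.mpr hdet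
  obtain ⟨u, hu, huℓ⟩ := exists_oneParameter_ne_one (K := K) hℓ
  refine hu (eq_one_of_isUnipotent_torusEnd heff hspan fun i => ?_)
  have h1 : torusEnd σ u (f i) = f i := by
    rw [mem_torusWeightSpace.mp (hf i) u, huℓ _ (congrFun hMℓ i), one_smul]
  have h2 := map_mem_orderFiltration (θ := torusEnd σ u) (haug u) (hfι i)
  have h3 := sub_mem (hfι i) h2
  rw [map_sub, h1] at h3
  convert h3 using 1
  abel

theorem lift_surjective_of_isUnipotent (hspan : ⨆ m, torusWeightSpace (torusEnd σ) m = ⊤)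
    (haug : ∀ t i, σ t (ι K i) ∈ orderFiltration K (Fin n) 1)
    {f : Fin n → FreeAlgebra K (Fin n)} {M : Matrix (Fin n) (Fin n) ℤ} (hM : M.det ≠ 0)
    (hf : ∀ i, f i ∈ torusWeightSpace (torusEnd σ) (M i)) (hu : IsUnipotent (lift K f)) :
    Function.Surjective (lift K f) := by
  rw [← AlgHom.range_eq_top, ← Algebra.toSubmodule_eq_top, eq_top_iff, ← hspan]
  refine iSup_le fun χ v hv => ?_
  have happrox : ∀ k, ∃ p ∈ wordWeightSpace (K := K) M χ,
      v - lift K f p ∈ orderFiltration K (Fin n) k := by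
    intro k
    obtain ⟨p, hp⟩ := hu.exists_sub_map_mem v k
    obtain ⟨a, ha, rfl⟩ :=
      (Submodule.mem_iSup_iff_exists_finsupp (wordWeightSpace (K := K) M) p).mp
        (by rw [iSup_wordWeightSpace]; exact Submodule.mem_top)
    refine ⟨a χ, ha χ, ?_⟩
    have := apply_mem_of_sum_mem (ρ := torusEnd σ) (N := orderFiltration K (Fin n) k)
      (fun t v hv => map_mem_orderFiltration (haug t) hv)
      (Finsupp.single χ v - a.mapRange (lift K f) (map_zero _)) ?_ ?_ χ
    · simpa using this
    · intro m
      rw [Finsupp.sub_apply, Finsupp.mapRange_apply]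
      refine sub_mem ?_ (lift_mem_torusWeightSpace hf (ha m))
      rw [Finsupp.single_apply]
      split_ifs with h
      · exact h ▸ hv
      · exact zero_mem _
    · rw [Finsupp.sum_sub_index (by simp), Finsupp.sum_single_index rfl,
        Finsupp.sum_mapRange_index (by simp)]
      simpa [Finsupp.sum] using hp
  obtain ⟨d, hd⟩ := exists_length_of_wordWeightSpace (K := K) hM χ
  obtain ⟨p, hp, hvp⟩ := happrox (d + 1)
  refine ⟨p, (sub_eq_zero.mp (eq_zero_of_forall_mem_orderFiltration fun k => ?_)).symm⟩
  obtain ⟨q, hq, hvq⟩ := happrox (max k (d + 1))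
  have hpq : p - q = 0 := by
    obtain ⟨h1, h2⟩ := hd _ (sub_mem hp hq)
    have h3 := sub_mem (orderFiltration_anti (le_max_right k (d + 1)) hvq) hvp
    have h4 := sub_mem h3 (hu.map_sub_mem h1)
    refine h2 ?_
    rw [map_sub] at h4
    convert h4 using 1
    abel
  rw [sub_eq_zero.mp hpq]
  exact orderFiltration_anti (le_max_left _ _) hvq

theorem isLinearizable_of_unipotent_coordinates (heff : Function.Injective σ)
    (hspan : ⨆ m, torusWeightSpace (torusEnd σ) m = ⊤)
    (haug : ∀ t i, σ t (ι K i) ∈ orderFiltration K (Fin n) 1)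
    {f : Fin n → FreeAlgebra K (Fin n)} {M : Matrix (Fin n) (Fin n) ℤ}
    (hf : ∀ i, f i ∈ torusWeightSpace (torusEnd σ) (M i))
    (hfι : ∀ i, f i - ι K i ∈ orderFiltration K (Fin n) 2) : TorusActionIsLinearizable σ := by
  have hu : IsUnipotent (lift K f) := fun i => by simpa using hfι i
  have hM := det_weights_ne_zero heff hspan haug hf hfι
  let β := AlgEquiv.ofBijective (lift K f)
    ⟨hu.injective, lift_surjective_of_isUnipotent hspan haug hM hf hu⟩
  have hβ : ∀ i, β (ι K i) = f i := fun i => lift_ι_apply f i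
  refine ⟨β, fun t i => ?_⟩
  have h1 := mem_torusWeightSpace.mp (hf i) t
  rw [torusEnd_apply] at h1
  rw [hβ, h1, map_smul, ← hβ, AlgEquiv.symm_apply_apply]
  exact Submodule.smul_mem _ _ (Submodule.subset_span ⟨i, rfl⟩)

end UnipotentCoordinates

end FreeAlgebra

theorem exists_torusCharacter_ne_one {K : Type} [Field K] [Infinite K] {r : ℕ} {m : Fin r → ℤ}
    (hm : m ≠ 0) : ∃ t : Fin r → Kˣ, torusCharacter (K := K) m t ≠ 1 := by
  by_contra! h
  refine hm (torusCharacter_injective (K := K) (MonoidHom.ext fun t => ?_))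
  rw [h t, torusCharacter_zero]

namespace FreeAlgebra

section Conjugation

variable {K : Type} [Field K] {n r : ℕ}

/-- The torus action `t ↦ γ⁻¹ ∘ σ t ∘ γ`. -/
def conjAction (γ : FreeAlgebra K (Fin n) ≃ₐ[K] FreeAlgebra K (Fin n))
    (σ : (Fin r → Kˣ) →* (FreeAlgebra K (Fin n) ≃ₐ[K] FreeAlgebra K (Fin n))) :
    (Fin r → Kˣ) →* (FreeAlgebra K (Fin n) ≃ₐ[K] FreeAlgebra K (Fin n)) :=
  (MulAut.conj γ⁻¹).toMonoidHom.comp σ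

variable {γ : FreeAlgebra K (Fin n) ≃ₐ[K] FreeAlgebra K (Fin n)}
  {σ : (Fin r → Kˣ) →* (FreeAlgebra K (Fin n) ≃ₐ[K] FreeAlgebra K (Fin n))}

theorem conjAction_apply (t : Fin r → Kˣ) (v : FreeAlgebra K (Fin n)) :
    conjAction γ σ t v = γ.symm (σ t (γ v)) := rfl

theorem conjAction_injective (h : Function.Injective σ) :
    Function.Injective (conjAction γ σ) :=
  (MulAut.conj γ⁻¹).injective.comp h

theorem symm_mem_torusWeightSpace_conjAction {m : Fin r → ℤ} {v : FreeAlgebra K (Fin n)}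
    (hv : v ∈ torusWeightSpace (torusEnd σ) m) :
    γ.symm v ∈ torusWeightSpace (torusEnd (conjAction γ σ)) m := by
  rw [mem_torusWeightSpace] at hv ⊢
  intro t
  have := hv t
  rw [torusEnd_apply] at this ⊢
  rw [conjAction_apply, AlgEquiv.apply_symm_apply, this, map_smul]

theorem iSup_torusWeightSpace_conjAction (h : ⨆ m, torusWeightSpace (torusEnd σ) m = ⊤) :
    ⨆ m, torusWeightSpace (torusEnd (conjAction γ σ)) m = ⊤ := by
  have hle : ⨆ m, torusWeightSpace (torusEnd σ) m ≤
      (⨆ m, torusWeightSpace (torusEnd (conjAction γ σ)) m).comap γ.symm.toLinearMap :=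
    iSup_le fun m v hv => Submodule.mem_iSup_of_mem m (symm_mem_torusWeightSpace_conjAction hv)
  rw [eq_top_iff]
  intro v _
  have := hle (h ▸ Submodule.mem_top : γ v ∈ _)
  simpa using this

theorem isLinearizable_of_conjAction (h : TorusActionIsLinearizable (conjAction γ σ)) :
    TorusActionIsLinearizable σ := by
  obtain ⟨β, hβ⟩ := h
  exact ⟨β.trans γ, fun t i => hβ t i⟩

end Conjugation

section LinearSubstitution

variable {K : Type} [Field K] {n : ℕ}

/-- The endomorphism of the free algebra substituting linear forms for the generators. -/
def linearSubst (B : Matrix (Fin n) (Fin n) K) : FreeAlgebra K (Fin n) →ₐ[K] FreeAlgebra K (Fin n) :=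
  lift K fun i => ∑ j, B i j • ι K j

theorem linearSubst_ι (B : Matrix (Fin n) (Fin n) K) (i : Fin n) :
    linearSubst B (ι K i) = ∑ j, B i j • ι K j := by
  simp [linearSubst]

theorem linearSubst_comp (B C : Matrix (Fin n) (Fin n) K) :
    (linearSubst B).comp (linearSubst C) = linearSubst (C * B) := by
  ext i
  simp only [Function.comp_apply, AlgHom.comp_apply, linearSubst_ι, map_sum, map_smul,
    Finset.smul_sum, Matrix.mul_apply, Finset.sum_smul, smul_smul]
  exact Finset.sum_comm

theorem linearSubst_one : linearSubst (1 : Matrix (Fin n) (Fin n) K) = AlgHom.id K _ := by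
  ext i
  simp [linearSubst_ι, Matrix.one_apply]

/-- The automorphism of the free algebra given by an invertible linear substitution. -/
noncomputable def linearSubstEquiv (B : Matrix (Fin n) (Fin n) K) (hB : IsUnit B.det) :
    FreeAlgebra K (Fin n) ≃ₐ[K] FreeAlgebra K (Fin n) :=
  AlgEquiv.ofAlgHom (linearSubst B) (linearSubst B⁻¹)
    (by rw [linearSubst_comp, Matrix.nonsing_inv_mul B hB, linearSubst_one])
    (by rw [linearSubst_comp, Matrix.mul_nonsing_inv B hB, linearSubst_one])

theorem linearSubst_ι_mem (B : Matrix (Fin n) (Fin n) K) (i : Fin n) :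
    linearSubst B (ι K i) ∈ orderFiltration K (Fin n) 1 := by
  rw [linearSubst_ι]
  exact sum_mem fun j _ => Submodule.smul_mem _ _ (ι_mem_orderFiltration j)

theorem linearPart_linearSubst_ι (B : Matrix (Fin n) (Fin n) K) (i : Fin n) :
    linearPart K (Fin n) (linearSubst B (ι K i)) = B i := by
  rw [linearSubst_ι, map_sum]
  ext k
  simp [linearPart_ι, Pi.single_apply]

/-- The automorphism of the free algebra translating the generators by scalars. -/
def translationEquiv (c : Fin n → K) : FreeAlgebra K (Fin n) ≃ₐ[K] FreeAlgebra K (Fin n) :=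
  AlgEquiv.ofAlgHom (lift K fun i => ι K i - algebraMap K _ (c i))
    (lift K fun i => ι K i + algebraMap K _ (c i)) (by ext i; simp) (by ext i; simp)

theorem algebraMapInv_translationEquiv_symm (c : Fin n → K) (v : FreeAlgebra K (Fin n)) :
    algebraMapInv ((translationEquiv c).symm v) =
      MvPolynomial.eval c (toMvPolynomial K (Fin n) v) := by
  have : algebraMapInv.comp ((translationEquiv c).symm : FreeAlgebra K (Fin n) →ₐ[K]
      FreeAlgebra K (Fin n)) =
      (MvPolynomial.aeval c).comp (toMvPolynomial K (Fin n)) := by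
    ext i
    simp [translationEquiv, algebraMapInv]
  simpa [MvPolynomial.coe_aeval_eq_eval] using DFunLike.congr_fun this v

end LinearSubstitution

section FixedPoint

variable {K : Type} [Field K] [Infinite K] {n : ℕ}
  {σ : (Fin n → Kˣ) →* (FreeAlgebra K (Fin n) ≃ₐ[K] FreeAlgebra K (Fin n))}

theorem exists_torusWeightSpace_linearPart {r : ℕ}
    {σ : (Fin r → Kˣ) →* (FreeAlgebra K (Fin n) ≃ₐ[K] FreeAlgebra K (Fin n))}
    (hspan : ⨆ m, torusWeightSpace (torusEnd σ) m = ⊤)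
    (haug : ∀ t i, σ t (ι K i) ∈ orderFiltration K (Fin n) 1) :
    ∃ (f : Fin n → FreeAlgebra K (Fin n)) (M : Fin n → Fin r → ℤ),
      (∀ i, f i ∈ torusWeightSpace (torusEnd σ) (M i)) ∧
      (∀ i, f i ∈ orderFiltration K (Fin n) 1) ∧
      LinearIndependent K fun i => linearPart K (Fin n) (f i) := by
  let S : Set (Fin n → K) := {x | ∃ m, ∃ v ∈ torusWeightSpace (torusEnd σ) m,
    v ∈ orderFiltration K (Fin n) 1 ∧ linearPart K (Fin n) v = x}
  have hinv : ∀ t v, algebraMapInv (σ t v) = algebraMapInv v := by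
    intro t v
    have : algebraMapInv.comp (torusEnd σ t) = algebraMapInv := by
      ext i
      have := mem_orderFiltration_one.mp (haug t i)
      simpa [algebraMapInv] using this
    exact DFunLike.congr_fun this v
  have hmem : ∀ m, ∀ v ∈ torusWeightSpace (torusEnd σ) m,
      linearPart K (Fin n) v ∈ Submodule.span K S := by
    intro m v hv
    refine Submodule.subset_span ⟨m, v - algebraMap K _ (algebraMapInv v), ?_, ?_, ?_⟩
    · rcases eq_or_ne m 0 with rfl | hm
      · exact sub_mem hv (algebraMap_mem_torusWeightSpace _)
      · obtain ⟨t, ht⟩ := exists_torusCharacter_ne_one (K := K) hm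
        have h1 := congrArg algebraMapInv (mem_torusWeightSpace.mp hv t)
        rw [torusEnd_apply, hinv, map_smul, smul_eq_mul] at h1
        have h2 : algebraMapInv v = 0 := by
          by_contra h0
          exact ht (mul_right_cancel₀ h0 (by rw [← h1, one_mul]))
        simpa [h2] using hv
    · rw [mem_orderFiltration_one, map_sub, AlgHom.commutes, Algebra.algebraMap_self_apply,
        sub_self]
    · rw [map_sub, linearPart_algebraMap, sub_zero]
  have htop : Submodule.span K S = ⊤ := by
    have hall : ∀ v, linearPart K (Fin n) v ∈ Submodule.span K S := by
      have : ⨆ m, torusWeightSpace (torusEnd σ) m ≤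
          (Submodule.span K S).comap (linearPart K (Fin n)) := iSup_le fun m v hv => hmem m v hv
      intro v
      exact this (hspan ▸ Submodule.mem_top : v ∈ _)
    rw [eq_top_iff, ← (Pi.basisFun K (Fin n)).span_eq, Submodule.span_le]
    rintro _ ⟨i, rfl⟩
    rw [Pi.basisFun_apply, ← linearPart_ι]
    exact hall _
  obtain ⟨g, hgS, -, hgli⟩ := Submodule.exists_fun_fin_finrank_span_eq K S
  have hrank : Module.finrank K (Submodule.span K S) = n := by
    rw [htop, finrank_top, Module.finrank_fin_fun]
  choose M f hf hf1 hfg using fun i => hgS (Fin.cast hrank.symm i)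
  refine ⟨f, M, hf, hf1, ?_⟩
  simp only [hfg]
  exact hgli.comp _ (Fin.cast_injective _)

/-- A torus action of maximal rank fixing the origin is linearizable. -/
theorem isLinearizable_of_fixes_origin (heff : Function.Injective σ)
    (hspan : ⨆ m, torusWeightSpace (torusEnd σ) m = ⊤)
    (haug : ∀ t i, σ t (ι K i) ∈ orderFiltration K (Fin n) 1) : TorusActionIsLinearizable σ := by
  obtain ⟨f, M, hf, hf1, hli⟩ := exists_torusWeightSpace_linearPart hspan haug
  let B : Matrix (Fin n) (Fin n) K := Matrix.of fun i => linearPart K (Fin n) (f i)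
  have hB : IsUnit B.det := by
    rw [← Matrix.isUnit_iff_isUnit_det, ← Matrix.linearIndependent_rows_iff_isUnit]
    exact hli
  have hsymm : ∀ {k v}, v ∈ orderFiltration K (Fin n) k →
      (linearSubstEquiv B hB).symm v ∈ orderFiltration K (Fin n) k := fun hv =>
    map_mem_orderFiltration (θ := linearSubst B⁻¹) (linearSubst_ι_mem _) hv
  refine isLinearizable_of_conjAction (γ := linearSubstEquiv B hB)
    (isLinearizable_of_unipotent_coordinates (conjAction_injective heff)
      (iSup_torusWeightSpace_conjAction hspan) (fun t i => ?_)
      (f := fun i => (linearSubstEquiv B hB).symm (f i)) (M := Matrix.of M)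
      (fun i => symm_mem_torusWeightSpace_conjAction (hf i)) fun i => ?_)
  · rw [conjAction_apply]
    exact hsymm (map_mem_orderFiltration (θ := torusEnd σ t) (haug t) (linearSubst_ι_mem B i))
  · have h1 : f i - linearSubst B (ι K i) ∈ orderFiltration K (Fin n) 2 := by
      refine sub_mem_orderFiltration_two ?_ ?_
      · rw [mem_orderFiltration_one.mp (hf1 i),
          mem_orderFiltration_one.mp (linearSubst_ι_mem B i)]
      · rw [linearPart_linearSubst_ι]
        rfl
    have h2 := hsymm h1
    rw [map_sub] at h2
    convert h2 using 2
    exact ((linearSubstEquiv B hB).symm_apply_apply _).symm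

theorem isLinearizable_of_fixed_point (heff : Function.Injective σ)
    (hspan : ⨆ m, torusWeightSpace (torusEnd σ) m = ⊤) {c : Fin n → K}
    (hc : ∀ t v, MvPolynomial.eval c (toMvPolynomial K (Fin n) (σ t v)) =
      MvPolynomial.eval c (toMvPolynomial K (Fin n) v)) : TorusActionIsLinearizable σ := by
  refine isLinearizable_of_conjAction (γ := translationEquiv c)
    (isLinearizable_of_fixes_origin (conjAction_injective heff)
      (iSup_torusWeightSpace_conjAction hspan) fun t i => ?_)
  rw [mem_orderFiltration_one, conjAction_apply, algebraMapInv_translationEquiv_symm, hc,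
    ← algebraMapInv_translationEquiv_symm, AlgEquiv.symm_apply_apply]
  simp [algebraMapInv]

end FixedPoint

end FreeAlgebra

theorem exists_det_ne_zero_of_forall_exists_sum_ne_zero {n : ℕ} (S : Set (Fin n → ℤ))
    (hS : ∀ ℓ : Fin n → ℤ, ℓ ≠ 0 → ∃ m ∈ S, ∑ j, m j * ℓ j ≠ 0) :
    ∃ M : Matrix (Fin n) (Fin n) ℤ, (∀ i, M i ∈ S) ∧ M.det ≠ 0 := by
  let T : Set (Fin n → ℚ) := (fun m j => (m j : ℚ)) '' S
  have htop : Submodule.span ℚ T = ⊤ := by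
    by_contra hne
    obtain ⟨φ, hφ, hker⟩ := Submodule.exists_le_ker_of_lt_top _ (lt_top_iff_ne_top.mpr hne)
    obtain ⟨b, hb⟩ := IsLocalization.exist_integer_multiples_of_finite (nonZeroDivisors ℤ)
      (fun j => φ (Pi.single j 1))
    choose ℓ hℓ using hb
    simp only [eq_intCast, zsmul_eq_mul] at hℓ
    have hb0 : ((b : ℤ) : ℚ) ≠ 0 := by exact_mod_cast nonZeroDivisors.coe_ne_zero b
    have hℓ0 : ℓ ≠ 0 := by
      rintro rfl
      refine hφ (LinearMap.pi_ext' fun j => LinearMap.ext_ring ?_)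
      have := hℓ j
      simpa [hb0] using this.symm
    obtain ⟨m, hm, hne⟩ := hS ℓ hℓ0
    have h1 : φ (fun j => (m j : ℚ)) = 0 := hker (Submodule.subset_span ⟨m, hm, rfl⟩)
    have h2 : φ (fun j => (m j : ℚ)) = ∑ j, (m j : ℚ) * φ (Pi.single j 1) := by
      conv_lhs => rw [pi_eq_sum_univ' (fun j => (m j : ℚ)), map_sum]
      refine Finset.sum_congr rfl fun j _ => ?_
      rw [map_smul, smul_eq_mul]
    refine hne ?_
    have h3 : ((∑ j, m j * ℓ j : ℤ) : ℚ) = b * φ (fun j => (m j : ℚ)) := by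
      rw [h2, Finset.mul_sum]
      push_cast
      refine Finset.sum_congr rfl fun j _ => ?_
      rw [hℓ]
      ring
    rw [h1, mul_zero] at h3
    exact_mod_cast h3
  obtain ⟨g, hgT, -, hgli⟩ := Submodule.exists_fun_fin_finrank_span_eq ℚ T
  have hrank : Module.finrank ℚ (Submodule.span ℚ T) = n := by
    rw [htop, finrank_top, Module.finrank_fin_fun]
  choose M hM hMg using fun i => hgT (Fin.cast hrank.symm i)
  refine ⟨Matrix.of M, hM, fun hdet => ?_⟩
  have hli : LinearIndependent ℚ ((Matrix.of M).map (Int.cast : ℤ → ℚ)).row := by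
    have : ((Matrix.of M).map (Int.cast : ℤ → ℚ)).row =
        fun i => g (Fin.cast hrank.symm i) := by
      ext i j
      exact congrFun (hMg i) j
    rw [this]
    exact hgli.comp _ (Fin.cast_injective _)
  rw [Matrix.linearIndependent_rows_iff_isUnit, Matrix.isUnit_iff_isUnit_det,
    ← Int.cast_det, hdet] at hli
  simp at hli

section CommutativeTorus

variable {K : Type} [Field K]

theorem eq_zero_of_mem_torusWeightSpace_of_ne [Infinite K] {r : ℕ} {A : Type} [Ring A]
    [Algebra K A] {ρ : (Fin r → Kˣ) → A →ₐ[K] A} {m m' : Fin r → ℤ} (h : m ≠ m') {a : A}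
    (ha : a ∈ torusWeightSpace ρ m) (ha' : a ∈ torusWeightSpace ρ m') : a = 0 := by
  classical
  have := apply_eq_zero_of_sum_eq_zero (ρ := ρ) (Finsupp.single m a - Finsupp.single m' a)
    (fun q => ?_) ?_ m
  · simpa [Finsupp.single_apply, h.symm] using this
  · rw [Finsupp.sub_apply, Finsupp.single_apply, Finsupp.single_apply]
    refine sub_mem ?_ ?_
    · split_ifs with hq
      · exact hq ▸ ha
      · exact zero_mem _
    · split_ifs with hq
      · exact hq ▸ ha'
      · exact zero_mem _
  · rw [Finsupp.sum_sub_index (by simp), Finsupp.sum_single_index rfl,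
      Finsupp.sum_single_index rfl, sub_self]

variable {n : ℕ} {A : Type} [CommRing A] [Algebra K A] {ρ : (Fin n → Kˣ) → A →ₐ[K] A}

/-- The subalgebra of invariants of a family of algebra endomorphisms indexed by a torus. -/
def torusInvariants (ρ : (Fin n → Kˣ) → A →ₐ[K] A) : Subalgebra K A :=
  ⨅ t, AlgHom.equalizer (ρ t) (AlgHom.id K A)

theorem mem_torusInvariants {a : A} : a ∈ torusInvariants ρ ↔ a ∈ torusWeightSpace ρ 0 := by
  simp [torusInvariants, mem_torusWeightSpace, Algebra.mem_iInf]

/-- Nonzero weight vectors with independent weights are independent over the invariants. -/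
theorem algebraicIndependent_torusInvariants [Infinite K] [IsDomain A]
    {M : Matrix (Fin n) (Fin n) ℤ} (hM : M.det ≠ 0) {g : Fin n → A}
    (hg : ∀ i, g i ∈ torusWeightSpace ρ (M i)) (hg0 : ∀ i, g i ≠ 0) :
    AlgebraicIndependent (torusInvariants ρ) g := by
  rw [algebraicIndependent_iff]
  intro p hp
  let w : (Fin n →₀ ℕ) → (Fin n → ℤ) := fun k => Matrix.vecMul (fun i => (k i : ℤ)) M
  have hw : Function.Injective w := by
    intro k k' h
    have := Matrix.eq_zero_of_vecMul_eq_zero hM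
      (v := (fun i => (k i : ℤ)) - fun i => (k' i : ℤ)) (by
        rw [Matrix.sub_vecMul, sub_eq_zero]
        exact h)
    ext i
    exact_mod_cast congrFun (sub_eq_zero.mp this) i
  have hpow : ∀ k : Fin n →₀ ℕ, ∏ i, g i ^ k i ∈ torusWeightSpace ρ (w k) := by
    intro k
    rw [mem_torusWeightSpace]
    intro t
    have h1 : ∀ i, ρ t (g i) = torusCharacter (M i) t • g i := fun i =>
      mem_torusWeightSpace.mp (hg i) t
    have h2 : torusCharacter (K := K) (w k) t = ∏ i, torusCharacter (M i) t ^ k i := by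
      have : w k = ∑ i, k i • M i := by
        ext j
        simp [w, Matrix.vecMul, dotProduct]
      rw [this]
      have hsum : ∀ s : Finset (Fin n), torusCharacter (K := K) (∑ i ∈ s, k i • M i) t =
          ∏ i ∈ s, torusCharacter (M i) t ^ k i := by
        intro s
        induction s using Finset.cons_induction with
        | empty => simp
        | cons i s hi ih =>
          have hnsmul : ∀ j : ℕ, torusCharacter (K := K) (j • M i) t =
              torusCharacter (M i) t ^ j := by
            intro j
            induction j with
            | zero => simp
            | succ j ihj => rw [succ_nsmul, torusCharacter_add, ihj, pow_succ]
          rw [Finset.sum_cons, Finset.prod_cons, torusCharacter_add, ih, hnsmul]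
      exact hsum _
    rw [map_prod, h2, ← Finset.prod_smul]
    simp only [map_pow, h1, smul_pow]
  let c : (Fin n →₀ ℕ) → A := fun k => ((p.coeff k : torusInvariants ρ) : A) * ∏ i, g i ^ k i
  have hc : ∀ k, c k ∈ torusWeightSpace ρ (w k) := by
    intro k
    have := mul_mem_torusWeightSpace (mem_torusInvariants.mp (p.coeff k).2) (hpow k)
    rwa [zero_add] at this
  let b : (Fin n →₀ ℕ) →₀ A := Finsupp.onFinset p.support c (by
    intro k hk
    rw [MvPolynomial.mem_support_iff]
    intro h0
    exact hk (by simp [c, h0]))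
  have hb : (b.mapDomain w).sum (fun _ v => v) = 0 := by
    rw [Finsupp.sum_mapDomain_index (fun _ => rfl) (fun _ _ _ => rfl),
      Finsupp.onFinset_sum _ (fun _ => rfl)]
    rw [MvPolynomial.aeval_def, MvPolynomial.eval₂_eq'] at hp
    exact hp
  have hzero := apply_eq_zero_of_sum_eq_zero (ρ := ρ) (b.mapDomain w) (fun m => by
    by_cases h : m ∈ Set.range w
    · obtain ⟨k, rfl⟩ := h
      rw [Finsupp.mapDomain_apply hw]
      exact hc k
    · rw [Finsupp.mapDomain_of_notMem_range _ _ h]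
      exact zero_mem _) hb
  ext k
  have h1 := hzero (w k)
  rw [Finsupp.mapDomain_apply hw] at h1
  have h2 : ((p.coeff k : torusInvariants ρ) : A) * ∏ i, g i ^ k i = 0 := h1
  have h3 : ∏ i, g i ^ k i ≠ 0 := Finset.prod_ne_zero_iff.mpr fun i _ => pow_ne_zero _ (hg0 i)
  simpa [h3] using h2

end CommutativeTorus

section PolynomialTorus

open MvPolynomial

variable {K : Type} [Field K] [IsAlgClosed K] {n : ℕ}
  {τ : (Fin n → Kˣ) → MvPolynomial (Fin n) K →ₐ[K] MvPolynomial (Fin n) K}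

/-- A torus of maximal rank has only constant invariants in the polynomial ring. -/
theorem exists_eq_C_of_mem_torusWeightSpace_zero {M : Matrix (Fin n) (Fin n) ℤ} (hM : M.det ≠ 0)
    (hg : ∀ i, ∃ g ∈ torusWeightSpace τ (M i), g ≠ 0) {a : MvPolynomial (Fin n) K}
    (ha : a ∈ torusWeightSpace τ 0) : ∃ c, a = C c := by
  have : Infinite K := IsAlgClosed.instInfinite
  choose g hg hg0 using hg
  have h1 := (algebraicIndependent_torusInvariants hM hg hg0).lift_cardinalMk_le_trdeg
  have h2 := trdeg_add_eq K (torusInvariants τ) (A := MvPolynomial (Fin n) K)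
  rw [MvPolynomial.trdeg_of_isDomain] at h2
  simp only [Cardinal.mk_fin, Cardinal.lift_id] at h1 h2
  have h3 : Algebra.trdeg (torusInvariants τ) (MvPolynomial (Fin n) K) = n :=
    le_antisymm (h2 ▸ self_le_add_left _ _) h1
  rw [h3] at h2
  have h4 : Algebra.trdeg K (torusInvariants τ) = 0 :=
    Cardinal.eq_of_add_eq_add_right (h2.trans (zero_add _).symm) (Cardinal.natCast_lt_aleph0)
  have : Algebra.IsAlgebraic K (torusInvariants τ) := trdeg_eq_zero_iff.mp h4
  obtain ⟨c, hc⟩ := (IsAlgClosed.algebraMap_bijective_of_isIntegral (k := K)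
    (K := torusInvariants τ)).2 ⟨a, mem_torusInvariants.mpr ha⟩
  exact ⟨c, (congrArg Subtype.val hc).symm⟩

/-- If the invariants are constant, the torus fixes a point of affine space. -/
theorem exists_eval_eq_of_invariants_eq_C (hspan : ⨆ m, torusWeightSpace τ m = ⊤)
    (hinv : ∀ a ∈ torusWeightSpace τ 0, ∃ c, a = C c) :
    ∃ c : Fin n → K, ∀ t a, eval c (τ t a) = eval c a := by
  have : Infinite K := IsAlgClosed.instInfinite
  let W : (Fin n → ℤ) → Submodule K (MvPolynomial (Fin n) K) :=
    fun m => ⨆ (_ : m ≠ 0), torusWeightSpace τ m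
  have hW0 : W 0 = ⊥ := by simp [W]
  have hWne : ∀ {m}, m ≠ 0 → W m = torusWeightSpace τ m := fun hm => by simp [W, hm]
  have hWle : ∀ m, W m ≤ torusWeightSpace τ m := fun m => iSup_le fun _ => le_rfl
  set I : Submodule K (MvPolynomial (Fin n) K) := ⨆ m, W m with hI
  have hmemI : ∀ {m a}, m ≠ 0 → a ∈ torusWeightSpace τ m → a ∈ I := fun {m a} hm ha =>
    Submodule.mem_iSup_of_mem m (by rwa [hWne hm])
  have hone : (1 : MvPolynomial (Fin n) K) ∉ I := by
    intro h
    obtain ⟨a, ha, hsum⟩ := (Submodule.mem_iSup_iff_exists_finsupp W _).mp h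
    have h0 := apply_eq_zero_of_sum_eq_zero (ρ := τ) (a - Finsupp.single 0 1) (fun m => by
      refine sub_mem (hWle m (ha m)) ?_
      rw [Finsupp.single_apply]
      split_ifs with h
      · exact h ▸ one_mem_torusWeightSpace
      · exact zero_mem _) (by
      rw [Finsupp.sum_sub_index (by simp), Finsupp.sum_single_index rfl, hsum, sub_self]) 0
    have ha0 : a 0 = 0 := by simpa [hW0] using ha 0
    simp [ha0] at h0
  have hmul : ∀ b : MvPolynomial (Fin n) K, ∀ a ∈ I, b * a ∈ I := by
    have hle : (⨆ m, torusWeightSpace τ m) * I ≤ I := by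
      rw [Submodule.iSup_mul]
      refine iSup_le fun k => ?_
      conv_lhs => rw [hI]
      rw [Submodule.mul_iSup]
      refine iSup_le fun m => Submodule.mul_le.mpr fun b hb a ha => ?_
      rcases eq_or_ne m 0 with rfl | hm
      · rw [hW0, Submodule.mem_bot] at ha
        rw [ha, mul_zero]
        exact zero_mem _
      rw [hWne hm] at ha
      have hba := mul_mem_torusWeightSpace hb ha
      by_cases hkm : k + m = 0
      · rw [hkm] at hba
        obtain ⟨c, hc⟩ := hinv _ hba
        rcases eq_or_ne c 0 with rfl | hc0
        · rw [hc, C_0]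
          exact zero_mem _
        · have hunit : IsUnit (b * a) := hc ▸ (IsUnit.mk0 c hc0).map C
          obtain ⟨d, -, hd⟩ := MvPolynomial.isUnit_iff_eq_C_of_isReduced.mp
            (isUnit_of_mul_isUnit_right hunit)
          have ha0 : a ∈ torusWeightSpace τ 0 := hd ▸ algebraMap_mem_torusWeightSpace d
          rw [eq_zero_of_mem_torusWeightSpace_of_ne hm ha ha0, mul_zero]
          exact zero_mem _
      · exact hmemI hkm hba
    exact fun b a ha => hle (Submodule.mul_mem_mul (hspan ▸ Submodule.mem_top) ha)
  have hX : ∀ i : Fin n, ∃ c, (X i : MvPolynomial (Fin n) K) - C c ∈ I := by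
    intro i
    obtain ⟨a, ha, hsum⟩ := exists_sum_of_iSup_eq_top hspan (X i)
    obtain ⟨c, hc⟩ := hinv _ (ha 0)
    refine ⟨c, ?_⟩
    have : X i - C c = (a.erase 0).sum fun _ v => v := by
      rw [← hc, ← hsum, sub_eq_iff_eq_add, add_comm]
      exact (Finsupp.add_sum_erase' a 0 (fun _ v => v) (fun _ => rfl)).symm
    rw [this]
    refine sum_mem fun m hm => ?_
    have hm0 : m ≠ 0 := by
      rintro rfl
      simp at hm
    rw [Finsupp.erase_ne hm0]
    exact hmemI hm0 (ha m)
  choose c hc using hX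
  have hsub : ∀ a, a - C (eval c a) ∈ I := by
    intro a
    induction a using MvPolynomial.induction_on with
    | C d => simp
    | add p q hp hq =>
      have := add_mem hp hq
      rw [map_add, C_add]
      convert this using 1
      ring
    | mul_X p i hp =>
      have := add_mem (hmul (X i) _ hp) (hmul (C (eval c p)) _ (hc i))
      rw [map_mul, eval_X, C_mul]
      convert this using 1
      ring
  have heval : ∀ a ∈ I, eval c a = 0 := by
    intro a ha
    by_contra hne
    have h1 : C (eval c a) ∈ I := by
      have := sub_mem ha (hsub a)
      rwa [sub_sub_cancel] at this
    have h2 := hmul (C (eval c a)⁻¹) _ h1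
    rw [← C_mul, inv_mul_cancel₀ hne, C_1] at h2
    exact hone h2
  refine ⟨c, fun t a => ?_⟩
  have hle : ⨆ m, torusWeightSpace τ m ≤
      LinearMap.eqLocus ((aeval c).comp (τ t)).toLinearMap (aeval c).toLinearMap := by
    refine iSup_le fun m a ha => ?_
    change aeval c (τ t a) = aeval c a
    rw [mem_torusWeightSpace.mp ha t, map_smul]
    rcases eq_or_ne m 0 with rfl | hm
    · rw [torusCharacter_zero, one_smul]
    · have := heval a (hmemI hm ha)
      rw [← coe_aeval_eq_eval] at this
      change aeval c a = 0 at this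
      rw [this, smul_zero]
  exact hle (hspan ▸ Submodule.mem_top : a ∈ _)

end PolynomialTorus

namespace FreeAlgebra

variable {K : Type} [Field K] {n : ℕ}
  {σ : (Fin n → Kˣ) →* (FreeAlgebra K (Fin n) ≃ₐ[K] FreeAlgebra K (Fin n))}

/-- The family of endomorphisms of the polynomial ring induced by a torus action. -/
noncomputable def commTorusEnd
    (σ : (Fin n → Kˣ) →* (FreeAlgebra K (Fin n) ≃ₐ[K] FreeAlgebra K (Fin n)))
    (t : Fin n → Kˣ) : MvPolynomial (Fin n) K →ₐ[K] MvPolynomial (Fin n) K :=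
  MvPolynomial.aeval fun i => toMvPolynomial K (Fin n) (σ t (ι K i))

theorem commTorusEnd_toMvPolynomial (t : Fin n → Kˣ) (v : FreeAlgebra K (Fin n)) :
    commTorusEnd σ t (toMvPolynomial K (Fin n) v) = toMvPolynomial K (Fin n) (σ t v) := by
  have : (commTorusEnd σ t).comp (toMvPolynomial K (Fin n)) =
      (toMvPolynomial K (Fin n)).comp (torusEnd σ t) := by
    ext1
    funext i
    simp [commTorusEnd]
  exact DFunLike.congr_fun this v

theorem iSup_torusWeightSpace_commTorusEnd (hspan : ⨆ m, torusWeightSpace (torusEnd σ) m = ⊤) :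
    ⨆ m, torusWeightSpace (commTorusEnd σ) m = ⊤ := by
  have hle : ⨆ m, torusWeightSpace (torusEnd σ) m ≤
      (⨆ m, torusWeightSpace (commTorusEnd σ) m).comap (toMvPolynomial K (Fin n)).toLinearMap := by
    refine iSup_le fun m v hv => Submodule.mem_iSup_of_mem m (mem_torusWeightSpace.mpr fun t => ?_)
    have := mem_torusWeightSpace.mp hv t
    rw [torusEnd_apply] at this
    change commTorusEnd σ t (toMvPolynomial K (Fin n) v) = _
    rw [commTorusEnd_toMvPolynomial, this, map_smul]
    rfl
  rw [eq_top_iff]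
  intro a _
  obtain ⟨v, rfl⟩ := toMvPolynomial_surjective a
  exact hle (hspan ▸ Submodule.mem_top : v ∈ _)

theorem exists_commTorusEnd_weights [Infinite K] (heff : Function.Injective σ)
    (hspan : ⨆ m, torusWeightSpace (torusEnd σ) m = ⊤) :
    ∃ M : Matrix (Fin n) (Fin n) ℤ,
      (∀ i, ∃ g ∈ torusWeightSpace (commTorusEnd σ) (M i), g ≠ 0) ∧ M.det ≠ 0 := by
  refine exists_det_ne_zero_of_forall_exists_sum_ne_zero
    {m | ∃ g ∈ torusWeightSpace (commTorusEnd σ) m, g ≠ 0} fun ℓ hℓ => ?_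
  by_contra! h
  obtain ⟨u, hu, huℓ⟩ := exists_oneParameter_ne_one (K := K) hℓ
  refine hu (eq_one_of_isUnipotent_torusEnd heff hspan
    (isUnipotent_of_toMvPolynomial_comp_eq fun i => ?_))
  have hle : ⨆ m, torusWeightSpace (commTorusEnd σ) m ≤
      LinearMap.eqLocus (commTorusEnd σ u).toLinearMap LinearMap.id := by
    refine iSup_le fun m a ha => ?_
    change commTorusEnd σ u a = a
    by_cases ha0 : a = 0
    · rw [ha0, map_zero]
    · rw [mem_torusWeightSpace.mp ha u, huℓ m (h m ⟨a, ha, ha0⟩), one_smul]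
  have := hle (iSup_torusWeightSpace_commTorusEnd hspan ▸ Submodule.mem_top :
    MvPolynomial.X i ∈ _)
  rw [torusEnd_apply, ← commTorusEnd_toMvPolynomial, toMvPolynomial_ι]
  exact this

theorem exists_fixed_point [IsAlgClosed K] (heff : Function.Injective σ)
    (hspan : ⨆ m, torusWeightSpace (torusEnd σ) m = ⊤) :
    ∃ c : Fin n → K, ∀ t v, MvPolynomial.eval c (toMvPolynomial K (Fin n) (σ t v)) =
      MvPolynomial.eval c (toMvPolynomial K (Fin n) v) := by
  have : Infinite K := IsAlgClosed.instInfinite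
  obtain ⟨M, hM, hdet⟩ := exists_commTorusEnd_weights heff hspan
  obtain ⟨c, hc⟩ := exists_eval_eq_of_invariants_eq_C (iSup_torusWeightSpace_commTorusEnd hspan)
    fun a ha => exists_eq_C_of_mem_torusWeightSpace_zero hdet hM ha
  exact ⟨c, fun t v => by rw [← commTorusEnd_toMvPolynomial, hc]⟩

/-- For a regular action the free algebra is spanned by weight vectors. -/
theorem iSup_torusWeightSpace_of_isRegular [Infinite K] {r : ℕ}
    {σ : (Fin r → Kˣ) →* (FreeAlgebra K (Fin n) ≃ₐ[K] FreeAlgebra K (Fin n))}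
    (hreg : TorusActionIsRegular σ) : ⨆ m, torusWeightSpace (torusEnd σ) m = ⊤ := by
  refine iSup_torusWeightSpace_eq_top_of_adjoin (adjoin_range_ι K (Fin n)) ?_
  rintro _ ⟨i, rfl⟩
  obtain ⟨a, ha⟩ := hreg i
  replace ha : ∀ t, σ t (ι K i) = a.sum fun m c => torusCharacter m t • c := ha
  have hW : ∀ m, a m ∈ torusWeightSpace (torusEnd σ) m := by
    intro m
    rw [mem_torusWeightSpace]
    intro s
    have h0 := eq_zero_of_sum_torusCharacter_smul_eq_zero (K := K)
      (a.mapRange (σ s) (map_zero _) -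
        Finsupp.onFinset a.support (fun m => torusCharacter m s • a m)
          (by intro m hm; simpa [torusCharacter_ne_zero] using hm)) (fun t => by
        rw [Finsupp.sum_sub_index (fun _ _ _ => smul_sub _ _ _),
          Finsupp.sum_mapRange_index (by simp), Finsupp.onFinset_sum _ (by simp), sub_eq_zero]
        have h1 : σ s (σ t (ι K i)) = σ (s * t) (ι K i) := by
          rw [map_mul]
          rfl
        rw [ha, ha, Finsupp.sum, map_sum] at h1
        simpa [Finsupp.sum, smul_smul, mul_comm] using h1)
    simpa [sub_eq_zero] using DFunLike.congr_fun h0 m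
  have h1 := ha 1
  rw [map_one, AlgEquiv.one_apply] at h1
  rw [h1]
  exact sum_mem fun m _ =>
    Submodule.smul_mem _ _ (Submodule.mem_iSup_of_mem m (hW m))

end FreeAlgebra

/-- Free algebra analogue of the Białynicki-Birula theorem: every effective regular action of
the `n`-dimensional torus on the free associative algebra on `n` generators is linearizable. -/
theorem maximal_torus_action_linearizable
    {K : Type} [Field K] [IsAlgClosed K] {n : ℕ} (hn : 1 ≤ n)
    (σ : (Fin n → Kˣ) →* (FreeAlgebra K (Fin n) ≃ₐ[K] FreeAlgebra K (Fin n)))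
    (hreg : TorusActionIsRegular σ)
    (heff : Function.Injective σ) :
    TorusActionIsLinearizable σ := by
  have : Infinite K := IsAlgClosed.instInfinite
  have hspan := iSup_torusWeightSpace_of_isRegular hreg
  obtain ⟨c, hc⟩ := exists_fixed_point heff hspan
  exact isLinearizable_of_fixed_point heff hspan hc
end

section
/- Let K be an infinite field, n ≥ 1, and let σ be a regular action of the one-dimensional torus Kˣ on F_n = FreeAlgebra K (Fin n) such that for every t ∈ Kˣ and every i, the element σ(t)(z_i) − z_i has all of its homogeneous components in degrees ≥ 2 (i.e., the degree-0 and degree-1 components of σ(t)(z_i) are 0 and z_i respectively). Then σ(t) is the identity automorphism for every t ∈ Kˣ. -/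
open FreeAlgebra

/-- A regular action of the one-dimensional torus `Kˣ` on the free algebra:
the image of each generator depends on `t` as a Laurent polynomial. -/
def OneTorusActionIsRegular {K : Type} [Field K] {n : ℕ}
    (σ : Kˣ →* (FreeAlgebra K (Fin n) ≃ₐ[K] FreeAlgebra K (Fin n))) : Prop :=
  ∀ i : Fin n, ∃ a : (ℤ →₀ FreeAlgebra K (Fin n)),
    ∀ t : Kˣ, σ t (ι K i) = a.sum fun m c => ((t ^ m : Kˣ) : K) • c

/-- The submodule of the free algebra consisting of the elements all of whose homogeneous
components (in the standard grading where each generator has degree 1) have degree at least 2. -/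
def FreeAlgebra.higherDegree (K : Type) [Field K] (n : ℕ) :
    Submodule K (FreeAlgebra K (Fin n)) :=
  ⨆ k : {k : ℕ // 2 ≤ k},
    Submodule.span K (Set.range (ι K : Fin n → FreeAlgebra K (Fin n))) ^ (k : ℕ)

namespace FreeAlgebra

section WordFiltration

variable {K X : Type*} [Field K]

/-- The noncommutative monomial attached to a word in the generators. -/
noncomputable def word (K : Type*) {X : Type*} [Field K] : FreeMonoid X →* FreeAlgebra K X :=
  FreeMonoid.lift (ι K)

theorem equivMonoidAlgebraFreeMonoid_word (w : FreeMonoid X) :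
    equivMonoidAlgebraFreeMonoid (word K w) = MonoidAlgebra.of K (FreeMonoid X) w := by
  have h : (equivMonoidAlgebraFreeMonoid (R := K) (X := X) : _ →* _).comp (word K) =
      MonoidAlgebra.of K (FreeMonoid X) := by
    ext x
    simp [word, equivMonoidAlgebraFreeMonoid]
  exact DFunLike.congr_fun h w

/-- The span of the words of length at least `d`. -/
noncomputable def wordFiltration (K X : Type*) [Field K] (d : ℕ) :
    Submodule K (FreeAlgebra K X) :=
  Submodule.span K (word K '' {w | d ≤ w.length})

theorem word_mem_wordFiltration {d : ℕ} {w : FreeMonoid X} (h : d ≤ w.length) :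
    word K w ∈ wordFiltration K X d :=
  Submodule.subset_span ⟨w, h, rfl⟩

theorem wordFiltration_antitone : Antitone (wordFiltration K X) := fun _ _ h =>
  Submodule.span_mono (Set.image_mono fun _ hw => le_trans h hw)

theorem wordFiltration_zero : wordFiltration K X 0 = ⊤ := by
  have h := congrArg Subalgebra.toSubmodule (adjoin_range_ι K X)
  rw [Algebra.adjoin_eq_span, ← FreeMonoid.mrange_lift] at h
  simpa [wordFiltration, word] using h

theorem mul_mem_wordFiltration {a b : ℕ} {x y : FreeAlgebra K X}
    (hx : x ∈ wordFiltration K X a) (hy : y ∈ wordFiltration K X b) :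
    x * y ∈ wordFiltration K X (a + b) := by
  have h := Submodule.mul_mem_mul hx hy
  rw [wordFiltration, wordFiltration, Submodule.span_mul_span] at h
  refine Submodule.span_mono ?_ h
  rintro _ ⟨_, ⟨v, hv, rfl⟩, _, ⟨w, hw, rfl⟩, rfl⟩
  refine ⟨v * w, ?_, map_mul _ _ _⟩
  simp only [Set.mem_ofPred_eq, FreeMonoid.length_mul] at *
  omega

theorem ι_mem_wordFiltration_one (x : X) : ι K x ∈ wordFiltration K X 1 := by
  simpa [word] using word_mem_wordFiltration (K := K) (w := FreeMonoid.of x) (d := 1) (by simp)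

theorem span_range_ι_pow_le_wordFiltration (k : ℕ) :
    Submodule.span K (Set.range (ι K : X → FreeAlgebra K X)) ^ k ≤ wordFiltration K X k := by
  induction k with
  | zero => simp [wordFiltration_zero]
  | succ k ih =>
    rw [pow_succ, Submodule.mul_le]
    refine fun x hx y hy => mul_mem_wordFiltration (ih hx) (Submodule.span_le.2 ?_ hy)
    rintro _ ⟨i, rfl⟩
    exact ι_mem_wordFiltration_one i

theorem coeff_eq_zero_of_mem_wordFiltration {d : ℕ} {x : FreeAlgebra K X}
    (hx : x ∈ wordFiltration K X d) {w : FreeMonoid X} (hw : w.length < d) :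
    (equivMonoidAlgebraFreeMonoid x).coeff w = 0 := by
  induction hx using Submodule.span_induction with
  | mem x hx =>
    obtain ⟨v, hv, rfl⟩ := hx
    have hvw : v ≠ w := by rintro rfl; exact absurd hv (not_le.2 hw)
    simp [equivMonoidAlgebraFreeMonoid_word, hvw]
  | zero => simp
  | add x y _ _ hx hy => simp [hx, hy]
  | smul c x _ hx => simp [hx]

theorem eq_zero_of_forall_mem_wordFiltration {x : FreeAlgebra K X}
    (hx : ∀ d, x ∈ wordFiltration K X d) : x = 0 := by
  apply (equivMonoidAlgebraFreeMonoid (R := K) (X := X)).injective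
  rw [map_zero]
  ext w
  exact coeff_eq_zero_of_mem_wordFiltration (hx (w.length + 1)) (Nat.lt_succ_self _)

/-- An endomorphism which is the identity on generators modulo degree `2` is the identity on the
associated graded pieces of the word filtration. -/
theorem map_sub_mem_wordFiltration (f : FreeAlgebra K X →ₐ[K] FreeAlgebra K X)
    (hf : ∀ i, f (ι K i) - ι K i ∈ wordFiltration K X 2) {d : ℕ} {x : FreeAlgebra K X}
    (hx : x ∈ wordFiltration K X d) : f x - x ∈ wordFiltration K X (d + 1) := by
  have key : ∀ w : FreeMonoid X,
      f (word K w) - word K w ∈ wordFiltration K X (w.length + 1) := by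
    intro w
    induction w using FreeMonoid.inductionOn' with
    | one => simp
    | of_mul i w ih =>
      have hw : f (word K w) ∈ wordFiltration K X w.length := by
        rw [← sub_add_cancel (f (word K w)) (word K w)]
        exact add_mem (wordFiltration_antitone (Nat.le_succ _) ih)
          (word_mem_wordFiltration le_rfl)
      have h : f (word K (FreeMonoid.of i * w)) - word K (FreeMonoid.of i * w) =
          (f (ι K i) - ι K i) * f (word K w) + ι K i * (f (word K w) - word K w) := by
        have : word K (FreeMonoid.of i) = ι K i := by simp [word]
        rw [map_mul, map_mul, this]
        noncomm_ring
      have hl : (FreeMonoid.of i * w).length + 1 = 2 + w.length := by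
        simp only [FreeMonoid.length_mul, FreeMonoid.length_of]; omega
      rw [h, hl]
      refine add_mem (mul_mem_wordFiltration (hf i) hw) ?_
      have := mul_mem_wordFiltration (ι_mem_wordFiltration_one i) ih
      rwa [show 1 + (w.length + 1) = 2 + w.length by omega] at this
  induction hx using Submodule.span_induction with
  | mem x hx =>
    obtain ⟨v, hv, rfl⟩ := hx
    exact wordFiltration_antitone (Nat.succ_le_succ hv) (key v)
  | zero => simp
  | add x y _ _ hx hy =>
    rw [map_add, add_sub_add_comm]
    exact add_mem hx hy
  | smul c x _ hx =>
    rw [map_smul, ← smul_sub]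
    exact Submodule.smul_mem _ c hx

/-- An endomorphism which is the identity on generators modulo degree `2` has no eigenvalue other
than `1`. -/
theorem eq_zero_of_map_eq_smul (f : FreeAlgebra K X →ₐ[K] FreeAlgebra K X)
    (hf : ∀ i, f (ι K i) - ι K i ∈ wordFiltration K X 2) {x : FreeAlgebra K X} {c : K}
    (hc : c ≠ 1) (hx : f x = c • x) : x = 0 := by
  refine eq_zero_of_forall_mem_wordFiltration fun d => ?_
  induction d with
  | zero => simp [wordFiltration_zero]
  | succ d ih =>
    have h := map_sub_mem_wordFiltration f hf ih
    rw [hx, show c • x - x = (c - 1) • x by rw [sub_smul, one_smul]] at h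
    exact (Submodule.smul_mem_iff _ (sub_ne_zero.2 hc)).1 h

end WordFiltration

theorem higherDegree_le_wordFiltration (K : Type) [Field K] (n : ℕ) :
    higherDegree K n ≤ wordFiltration K (Fin n) 2 :=
  iSup_le fun k => (span_range_ι_pow_le_wordFiltration _).trans (wordFiltration_antitone k.2)

end FreeAlgebra

section LaurentCharacters

variable {K : Type*} [Field K] [Infinite K]

theorem exists_units_zpow_ne_one_s2 {m : ℤ} (hm : m ≠ 0) : ∃ s : Kˣ, s ^ m ≠ 1 := by
  have hN : 0 < m.natAbs := Int.natAbs_pos.2 hm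
  by_contra! h
  refine mul_ne_zero Polynomial.X_ne_zero (Polynomial.X_pow_sub_C_ne_zero hN (1 : K))
    (Polynomial.funext fun x => ?_)
  rcases eq_or_ne x 0 with rfl | hx
  · simp
  · have h1 : Units.mk0 x hx ^ m.natAbs = 1 := pow_natAbs_eq_one.2 (h _)
    have h2 : x ^ m.natAbs = 1 := by simpa using congrArg Units.val h1
    simp [h2]

theorem linearIndependent_units_zpow :
    LinearIndependent K (fun (m : ℤ) (t : Kˣ) => ((t ^ m : Kˣ) : K)) := by
  have hinj : Function.Injective
      (fun m : ℤ => (Units.coeHom K).comp (zpowGroupHom m : Kˣ →* Kˣ)) := by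
    intro m k h
    by_contra hmk
    obtain ⟨s, hs⟩ := exists_units_zpow_ne_one_s2 (K := K) (sub_ne_zero.2 hmk)
    refine hs ?_
    rw [zpow_sub, mul_inv_eq_one]
    exact Units.ext (DFunLike.congr_fun h s)
  exact (linearIndependent_monoidHom Kˣ K).comp _ hinj

/-- The coefficients of a vector-valued Laurent polynomial function over an infinite field are
determined by its values. -/
theorem Finsupp.eq_zero_of_sum_zpow_smul_eq_zero {M : Type*} [AddCommGroup M] [Module K M]
    (a : ℤ →₀ M) (ha : ∀ t : Kˣ, (a.sum fun m c => ((t ^ m : Kˣ) : K) • c) = 0) : a = 0 := by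
  ext m
  refine (Module.forall_dual_apply_eq_zero_iff K _).1 fun φ => ?_
  have h := linearIndependent_iff.1 (linearIndependent_units_zpow (K := K))
    (a.mapRange φ (map_zero φ)) (by
      ext t
      have := congrArg φ (ha t)
      rw [Finsupp.linearCombination_apply, Finsupp.sum_mapRange_index (by simp)]
      simpa [Finsupp.sum, mul_comm] using this)
  simpa using DFunLike.congr_fun h m

/-- The coefficients of a regular orbit map are weight vectors. -/
theorem weight_of_orbit_eq_sum_zpow {M : Type*} [AddCommGroup M] [Module K M]
    (ρ : Kˣ →* Module.End K M) {x : M} (a : ℤ →₀ M)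
    (ha : ∀ t : Kˣ, ρ t x = a.sum fun m c => ((t ^ m : Kˣ) : K) • c) (s : Kˣ) (m : ℤ) :
    ρ s (a m) = ((s ^ m : Kˣ) : K) • a m := by
  have h := Finsupp.eq_zero_of_sum_zpow_smul_eq_zero (K := K)
    (Finsupp.onFinset a.support (fun m => ρ s (a m) - ((s ^ m : Kˣ) : K) • a m) (by
      intro m hm
      rw [Finsupp.mem_support_iff]
      rintro h0
      simp [h0] at hm)) (by
    intro t
    rw [Finsupp.onFinset_sum _ (by simp)]
    have h1 : ρ (t * s) x = ρ s (ρ t x) := by rw [mul_comm, map_mul]; rfl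
    rw [ha, ha] at h1
    simp only [Finsupp.sum, map_sum, map_smul, mul_zpow, Units.val_mul, mul_smul] at h1
    simp only [smul_sub, Finset.sum_sub_distrib, h1, sub_self])
  simpa [sub_eq_zero] using DFunLike.congr_fun h m

end LaurentCharacters

/-- If `K` is infinite and a regular `Kˣ`-action `σ` on the free algebra satisfies that every
`σ(t)(z_i) - z_i` has all of its homogeneous components in degrees `≥ 2`, then `σ` is trivial. -/
theorem one_torus_action_unipotent_trivial
    {K : Type} [Field K] [Infinite K] {n : ℕ} (hn : 1 ≤ n)
    (σ : Kˣ →* (FreeAlgebra K (Fin n) ≃ₐ[K] FreeAlgebra K (Fin n)))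
    (hreg : OneTorusActionIsRegular σ)
    (hhd : ∀ (t : Kˣ) (i : Fin n),
      σ t (ι K i) - ι K i ∈ FreeAlgebra.higherDegree K n) :
    ∀ t : Kˣ, σ t = 1 := by
  let ρ : Kˣ →* Module.End K (FreeAlgebra K (Fin n)) :=
    { toFun := fun t => (σ t).toLinearMap
      map_one' := by ext; simp
      map_mul' := fun s t => by ext; simp }
  have hfix : ∀ (t : Kˣ) (i : Fin n), σ t (ι K i) = ι K i := by
    intro t i
    obtain ⟨a, ha⟩ := hreg i
    have hzero : ∀ m ≠ 0, a m = 0 := by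
      intro m hm
      obtain ⟨s, hs⟩ := exists_units_zpow_ne_one_s2 (K := K) hm
      exact eq_zero_of_map_eq_smul (σ s : _ →ₐ[K] _)
        (fun j => higherDegree_le_wordFiltration K n (hhd s j))
        (mt Units.val_eq_one.1 hs) (weight_of_orbit_eq_sum_zpow ρ a ha s m)
    have hconst : ∀ u : Kˣ, σ u (ι K i) = a 0 := by
      intro u
      rw [ha, Finsupp.sum, Finset.sum_eq_single 0]
      · simp
      · intro m _ hm
        rw [hzero m hm, smul_zero]
      · intro h
        rw [Finsupp.notMem_support_iff.1 h, smul_zero]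
    rw [hconst t, ← hconst 1, map_one, AlgEquiv.one_apply]
  intro t
  have h : (σ t : FreeAlgebra K (Fin n) →ₐ[K] FreeAlgebra K (Fin n)) = AlgHom.id K _ :=
    FreeAlgebra.hom_ext (funext fun i => hfix t i)
  exact AlgEquiv.ext fun x => DFunLike.congr_fun h x
end
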